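/- Fix a constant κ > 0 and a smooth function α(v). On ℝ³ with coordinates (u,v,x), consider the Brinkmann metric g = dv(2du + F(u,v,x)dv) + dx² with F(u,v,x) = (u²κ)/2 + α(v)(u + 2√(2/κ)·arctanh(tan(x√κ/(2√2)))). Then the scalar curvature of g equals κ, and the function h(u,v,x) = cos(x·√(κ/2)) satisfies the vacuum weighted Einstein field equation h·ρ − Hes_h + (Δh)g = 0 (i.e. with Λ = 0); moreover ∇h = −√(κ/2)·sin(x√(κ/2))·∂_x and ‖∇h‖² = (κ/2)·sin²(x√(κ/2)), so ∇h is spacelike wherever it is nonzero. Hence every positive constant scalar curvature is realized by a solution of the vacuum weighted Einstein field equation with vanishing cosmological constant on a Brinkmann wave. -/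

import Mathlib

noncomputable section
open Matrix

/-- Points of the coordinate space `ℝⁿ`. -/
abbrev Pt (n : ℕ) := Fin n → ℝ

/-- Partial derivative `∂_i f` in the `i`-th coordinate direction. -/
def pd {n : ℕ} (i : Fin n) (f : Pt n → ℝ) (p : Pt n) : ℝ :=
  fderiv ℝ f p (Pi.single i 1)

/-- The inverse metric `g^{ij}` of a metric `g` given as a matrix of components. -/
def ginv {n : ℕ} (g : Pt n → Fin n → Fin n → ℝ) (p : Pt n) : Matrix (Fin n) (Fin n) ℝ :=
  (Matrix.of (g p))⁻¹

/-- Christoffel symbols `Γ^k_{ij}` of the Levi-Civita connection of `g`. -/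
def chr {n : ℕ} (g : Pt n → Fin n → Fin n → ℝ) (k i j : Fin n) (p : Pt n) : ℝ :=
  (1/2) * ∑ l, ginv g p k l *
    (pd i (fun q => g q l j) p + pd j (fun q => g q l i) p - pd l (fun q => g q i j) p)

/-- Components `R_{ij}` of the Ricci tensor of `g`. -/
def RicciT {n : ℕ} (g : Pt n → Fin n → Fin n → ℝ) (i j : Fin n) (p : Pt n) : ℝ :=
  (∑ k, pd k (fun q => chr g k i j q) p) - (∑ k, pd j (fun q => chr g k i k q) p)
  + (∑ k, ∑ l, chr g k k l p * chr g l i j p) - (∑ k, ∑ l, chr g k j l p * chr g l i k p)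

/-- Scalar curvature `τ = g^{ij} R_{ij}` of `g`. -/
def Scal {n : ℕ} (g : Pt n → Fin n → Fin n → ℝ) (p : Pt n) : ℝ :=
  ∑ i, ∑ j, ginv g p i j * RicciT g i j p

/-- Components of the Hessian `Hes_f` of a function `f` with respect to `g`. -/
def Hess {n : ℕ} (g : Pt n → Fin n → Fin n → ℝ) (f : Pt n → ℝ) (i j : Fin n) (p : Pt n) : ℝ :=
  pd i (fun q => pd j f q) p - ∑ k, chr g k i j p * pd k f p

/-- Laplacian `Δf = g^{ij}(Hes_f)_{ij}`. -/
def Lap {n : ℕ} (g : Pt n → Fin n → Fin n → ℝ) (f : Pt n → ℝ) (p : Pt n) : ℝ :=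
  ∑ i, ∑ j, ginv g p i j * Hess g f i j p

/-- Components of the gradient `∇f = g^{ij} ∂_j f ∂_i`. -/
def gradV {n : ℕ} (g : Pt n → Fin n → Fin n → ℝ) (f : Pt n → ℝ) (p : Pt n) (i : Fin n) : ℝ :=
  ∑ j, ginv g p i j * pd j f p

/-- `‖∇f‖² = g(∇f,∇f) = g^{ij} ∂_i f ∂_j f`. -/
def gradNorm2 {n : ℕ} (g : Pt n → Fin n → Fin n → ℝ) (f : Pt n → ℝ) (p : Pt n) : ℝ :=
  ∑ i, ∑ j, ginv g p i j * pd i f p * pd j f p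

/-- The vacuum weighted Einstein field equation
`h·ρ − Hes_h + (Δh + Λ)g = 0` at the point `p`. -/
def WEFEat {n : ℕ} (g : Pt n → Fin n → Fin n → ℝ) (h : Pt n → ℝ) (Λ : ℝ) (p : Pt n) : Prop :=
  ∀ i j, h p * RicciT g i j p - Hess g h i j p + (Lap g h p + Λ) * g p i j = 0

/-- The Ricci operator `Ric = g^{-1}·ρ` as a matrix (column `j` lists the
components of `Ric ∂_j`). -/
def RicOpM {n : ℕ} (g : Pt n → Fin n → Fin n → ℝ) (p : Pt n) : Matrix (Fin n) (Fin n) ℝ :=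
  Matrix.of fun i j => ∑ k, ginv g p i k * RicciT g k j p

/-- The `k`-th component of the covariant derivative `∇_{∂_i} V`. -/
def covD {n : ℕ} (g : Pt n → Fin n → Fin n → ℝ) (V : Pt n → Fin n → ℝ) (i k : Fin n)
    (p : Pt n) : ℝ :=
  pd i (fun q => V q k) p + ∑ m, chr g k i m p * V p m

/-- Components `R^l_{ijk}` of the (1,3)-curvature tensor:
`R(∂_i,∂_j)∂_k = R^l_{ijk} ∂_l`. -/
def RiemUp {n : ℕ} (g : Pt n → Fin n → Fin n → ℝ) (l i j k : Fin n) (p : Pt n) : ℝ :=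
  pd i (fun q => chr g l j k q) p - pd j (fun q => chr g l i k q) p
  + (∑ m, chr g l i m p * chr g m j k p) - (∑ m, chr g l j m p * chr g m i k p)

/-- The (0,4)-curvature tensor `R(∂_i,∂_j,∂_k,∂_l) = g(R(∂_i,∂_j)∂_k, ∂_l)`. -/
def RiemLow {n : ℕ} (g : Pt n → Fin n → Fin n → ℝ) (i j k l : Fin n) (p : Pt n) : ℝ :=
  ∑ m, g p l m * RiemUp g m i j k p

/-- A symmetric matrix of Lorentzian signature `(−,+,+)`. -/
def IsLorentz3 (A : Matrix (Fin 3) (Fin 3) ℝ) : Prop :=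
  A.IsSymm ∧ ∃ P : Matrix (Fin 3) (Fin 3) ℝ, IsUnit P.det ∧
    Pᵀ * A * P = Matrix.diagonal ![(-1 : ℝ), 1, 1]

/-- Jacobian matrix of a coordinate change `ψ`. -/
def jac {n : ℕ} (ψ : Pt n → Pt n) (q : Pt n) : Matrix (Fin n) (Fin n) ℝ :=
  Matrix.of fun i j => pd j (fun r => ψ r i) q

/-- Pullback `ψ^*g` of the metric `g` under the coordinate change `ψ`. -/
def pullback {n : ℕ} (g : Pt n → Fin n → Fin n → ℝ) (ψ : Pt n → Pt n) (q : Pt n) :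
    Matrix (Fin n) (Fin n) ℝ :=
  (jac ψ q)ᵀ * Matrix.of (g (ψ q)) * jac ψ q

/-- The 3-dimensional plane-wave metric `dv(2du − (α''(v)/α(v))x² dv) + dx²`
in coordinates `(u,v,x) = (q 0, q 1, q 2)`. -/
def planeWaveM (α : ℝ → ℝ) (q : Pt 3) : Matrix (Fin 3) (Fin 3) ℝ :=
  Matrix.of fun i j =>
    if i = 0 ∧ j = 1 then 1 else if i = 1 ∧ j = 0 then 1
    else if i = 1 ∧ j = 1 then -(deriv (deriv α) (q 1) / α (q 1)) * (q 2)^2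
    else if i = 2 ∧ j = 2 then 1 else 0


/-- Inverse hyperbolic tangent. -/
def artanh (x : ℝ) : ℝ := (1/2) * Real.log ((1 + x) / (1 - x))

/-- The 3-dimensional Brinkmann metric `dv(2du + F(u,v,x)dv) + dx²` in
coordinates `(u,v,x) = (p 0, p 1, p 2)`. -/
def brinkM (F : Pt 3 → ℝ) (p : Pt 3) : Fin 3 → Fin 3 → ℝ := fun i j =>
  if i = 0 ∧ j = 1 then 1 else if i = 1 ∧ j = 0 then 1
  else if i = 1 ∧ j = 1 then F p
  else if i = 2 ∧ j = 2 then 1 else 0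

/-- The function `F(u,v,x) = u²κ/2 + α(v)(u + 2√(2/κ)·artanh(tan(x√κ/(2√2))))`
of Example 4.3(1). -/
def exF (κ : ℝ) (α : ℝ → ℝ) (p : Pt 3) : ℝ :=
  (p 0)^2 * κ / 2 + α (p 1) *
    (p 0 + 2 * Real.sqrt (2/κ) * artanh (Real.tan (p 2 * Real.sqrt κ / (2 * Real.sqrt 2))))

/-!
For a Brinkmann metric the scalar curvature is `∂_u²F`, and for a density `h = φ(x)` the weighted
Einstein equation forces `Λ = 0` and reduces to `φ ∂_u²F = -2φ''`, `φ ∂_x∂_uF = 0` and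
`∂_x(φ ∂_xF) = 0`. A potential `F = κu²/2 + α(v)(u + G(x))` solves this system as soon as
`φ'' = -(κ/2)φ` and `φG'` is constant. For `φ = cos(cx)` with `c = √(κ/2)`, the profile `G` is
therefore a primitive of `sec(cx)`, namely `(2/c) artanh(tan(cx/2))`, which lives exactly where
`h > 0`.
-/

open Topology Filter

section PartialDerivatives

theorem differentiableAt_deriv_of_contDiffAt_two {φ : ℝ → ℝ} {x : ℝ} (hφ : ContDiffAt ℝ 2 φ x) :
    DifferentiableAt ℝ (deriv φ) x :=
  (hφ.derivWithin (m := 1) (by norm_num)).differentiableAt one_ne_zero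

variable {n : ℕ} {f g : Pt n → ℝ} {p : Pt n} (i j : Fin n)

theorem pd_congr (h : f =ᶠ[𝓝 p] g) : pd i f p = pd i g p := by
  rw [pd, pd, h.fderiv_eq]

theorem pd_const (c : ℝ) (p : Pt n) : pd i (fun _ ↦ c) p = 0 := by
  simp [pd]

theorem pd_const_mul (c : ℝ) (f : Pt n → ℝ) (p : Pt n) :
    pd i (fun q ↦ c * f q) p = c * pd i f p := by
  have h := fderiv_const_smul_field (𝕜 := ℝ) (f := f) c
  simpa [pd] using! congr($h p (Pi.single i 1))

theorem pd_add (hf : DifferentiableAt ℝ f p) (hg : DifferentiableAt ℝ g p) :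
    pd i (fun q ↦ f q + g q) p = pd i f p + pd i g p := by
  simp [pd, fderiv_fun_add hf hg]

theorem pd_mul (hf : DifferentiableAt ℝ f p) (hg : DifferentiableAt ℝ g p) :
    pd i (fun q ↦ f q * g q) p = pd i f p * g p + f p * pd i g p := by
  simp only [pd, fderiv_fun_mul hf hg, _root_.add_apply, _root_.smul_apply, smul_eq_mul]
  ring

theorem pd_comp_apply (φ : ℝ → ℝ) (p : Pt n) :
    pd i (fun q ↦ φ (q j)) p = if i = j then deriv φ (p j) else 0 := by
  by_cases hφ : DifferentiableAt ℝ φ (p j)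
  · have h : HasFDerivAt (fun q : Pt n ↦ φ (q j)) _ p :=
      hφ.hasDerivAt.comp_hasFDerivAt (f := fun q : Pt n ↦ q j) p
        (ContinuousLinearMap.proj (R := ℝ) (φ := fun _ : Fin n ↦ ℝ) j).hasFDerivAt
    rw [pd, h.fderiv]
    simp [Pi.single_apply, eq_comm]
  -- If `φ` is not differentiable, neither is the composite, as its restriction to the `j`-th
  -- coordinate line through `p` is `φ`; both derivatives then take the junk value `0`.
  · have hcomp : ¬ DifferentiableAt ℝ (fun q : Pt n ↦ φ (q j)) p := by
      intro h
      refine hφ ?_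
      have hline := DifferentiableAt.comp (p j) (f := Function.update p j)
        (g := fun q : Pt n ↦ φ (q j)) (by simpa using h)
        (hasDerivAt_update p j (p j)).differentiableAt
      simpa [Function.comp_def] using hline
    simp [pd, fderiv_zero_of_not_differentiableAt hcomp, deriv_zero_of_not_differentiableAt hφ]

theorem pd_comm (hf : ContDiffAt ℝ 2 f p) : pd i (pd j f) p = pd j (pd i f) p := by
  have hdf : DifferentiableAt ℝ (fderiv ℝ f) p :=
    (hf.fderiv_right (m := 1) (by norm_num)).differentiableAt (by norm_num)
  have pd_pd_eq (k l : Fin n) :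
      pd k (pd l f) p = fderiv ℝ (fderiv ℝ f) p (Pi.single k 1) (Pi.single l 1) := by
    unfold pd
    rw [fderiv_clm_apply hdf (differentiableAt_const _)]
    simp
  rw [pd_pd_eq, pd_pd_eq]
  exact hf.isSymmSndFDerivAt (by simp) _ _

theorem differentiableAt_pd (hf : ContDiffAt ℝ 2 f p) : DifferentiableAt ℝ (pd i f) p :=
  ((hf.fderiv_right (m := 1) (by norm_num)).differentiableAt (by norm_num)).clm_apply
    (differentiableAt_const _)

end PartialDerivatives

section Brinkmann

theorem ginv_brinkM (F : Pt 3 → ℝ) (p : Pt 3) :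
    ginv (brinkM F) p = !![-F p, 1, 0; 1, 0, 0; 0, 0, 1] := by
  refine Matrix.inv_eq_right_inv ?_
  ext i j
  fin_cases i <;> fin_cases j <;> simp [Matrix.mul_apply, Fin.sum_univ_three, brinkM]

theorem pd_brinkM (F : Pt 3 → ℝ) (p : Pt 3) (l i j : Fin 3) :
    pd l (fun q ↦ brinkM F q i j) p = if i = 1 ∧ j = 1 then pd l F p else 0 := by
  fin_cases i <;> fin_cases j <;> simp [brinkM, pd_const]

/-- The Christoffel symbols of the Brinkmann metric in terms of the first partial derivatives of
`F`; the entry `brinkmannChristoffel F p k i j` is `Γ^k_{ij}` at `p`. -/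
def brinkmannChristoffel (F : Pt 3 → ℝ) (p : Pt 3) : Fin 3 → Matrix (Fin 3) (Fin 3) ℝ :=
  ![!![0, 1 / 2 * pd 0 F p, 0;
      1 / 2 * pd 0 F p, 1 / 2 * (pd 1 F p + F p * pd 0 F p), 1 / 2 * pd 2 F p;
      0, 1 / 2 * pd 2 F p, 0],
    !![0, 0, 0; 0, -1 / 2 * pd 0 F p, 0; 0, 0, 0],
    !![0, 0, 0; 0, -1 / 2 * pd 2 F p, 0; 0, 0, 0]]

theorem chr_brinkM (F : Pt 3 → ℝ) (k i j : Fin 3) (p : Pt 3) :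
    chr (brinkM F) k i j p = brinkmannChristoffel F p k i j := by
  simp only [chr, pd_brinkM, ginv_brinkM, Fin.sum_univ_three]
  fin_cases k <;> fin_cases i <;> fin_cases j <;> simp [brinkmannChristoffel] <;> ring

theorem RicciT_brinkM {F : Pt 3 → ℝ} {p : Pt 3} (hF : ContDiffAt ℝ 2 F p) (i j : Fin 3) :
    RicciT (brinkM F) i j p =
      !![0, pd 0 (pd 0 F) p / 2, 0;
        pd 0 (pd 0 F) p / 2, (F p * pd 0 (pd 0 F) p - pd 2 (pd 2 F) p) / 2, pd 2 (pd 0 F) p / 2;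
        0, pd 2 (pd 0 F) p / 2, 0] i j := by
  have hF₁ : DifferentiableAt ℝ F p := hF.differentiableAt (by norm_num)
  have hΓ : pd 0 (fun q ↦ pd 1 F q + F q * pd 0 F q) p =
      pd 1 (pd 0 F) p + (pd 0 F p * pd 0 F p + F p * pd 0 (pd 0 F) p) := by
    rw [pd_add 0 (differentiableAt_pd 1 hF) (hF₁.fun_mul (differentiableAt_pd 0 hF)),
      pd_mul 0 hF₁ (differentiableAt_pd 0 hF), ← pd_comm 0 1 hF]
  have hux := pd_comm 0 2 hF
  simp only [RicciT, chr_brinkM, Fin.sum_univ_three]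
  fin_cases i <;> fin_cases j <;>
    simp [brinkmannChristoffel, pd_const, pd_const_mul, hΓ, hux] <;> ring

theorem Scal_brinkM {F : Pt 3 → ℝ} {p : Pt 3} (hF : ContDiffAt ℝ 2 F p) :
    Scal (brinkM F) p = pd 0 (pd 0 F) p := by
  simp [Scal, RicciT_brinkM hF, ginv_brinkM, Fin.sum_univ_three]

variable (F : Pt 3 → ℝ) (φ : ℝ → ℝ) (p : Pt 3)

theorem Hess_brinkM_comp_apply_two (i j : Fin 3) :
    Hess (brinkM F) (fun q ↦ φ (q 2)) i j p =
      !![0, 0, 0; 0, pd 2 F p * deriv φ (p 2) / 2, 0; 0, 0, deriv (deriv φ) (p 2)] i j := by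
  simp only [Hess, chr_brinkM, Fin.sum_univ_three]
  fin_cases i <;> fin_cases j <;> simp [brinkmannChristoffel, pd_comp_apply, pd_const]
  ring

theorem Lap_brinkM_comp_apply_two :
    Lap (brinkM F) (fun q ↦ φ (q 2)) p = deriv (deriv φ) (p 2) := by
  simp [Lap, Hess_brinkM_comp_apply_two, ginv_brinkM, Fin.sum_univ_three]

theorem gradV_brinkM_comp_apply_two :
    gradV (brinkM F) (fun q ↦ φ (q 2)) p = fun i ↦ if i = 2 then deriv φ (p 2) else 0 := by
  ext i
  fin_cases i <;> simp [gradV, ginv_brinkM, pd_comp_apply]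

theorem gradNorm2_brinkM_comp_apply_two :
    gradNorm2 (brinkM F) (fun q ↦ φ (q 2)) p = deriv φ (p 2) ^ 2 := by
  simp [gradNorm2, ginv_brinkM, pd_comp_apply, sq]

variable {F p}

theorem WEFEat_brinkM_comp_apply_two_iff (hF : ContDiffAt ℝ 2 F p) (Λ : ℝ) :
    WEFEat (brinkM F) (fun q ↦ φ (q 2)) Λ p ↔
      Λ = 0 ∧ φ (p 2) * pd 0 (pd 0 F) p + 2 * deriv (deriv φ) (p 2) = 0 ∧
        φ (p 2) * pd 2 (pd 0 F) p = 0 ∧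
        φ (p 2) * pd 2 (pd 2 F) p + deriv φ (p 2) * pd 2 F p = 0 := by
  simp only [WEFEat, RicciT_brinkM hF, Hess_brinkM_comp_apply_two, Lap_brinkM_comp_apply_two]
  constructor
  · intro h
    have hΛ : Λ = 0 := by simpa [brinkM] using h 2 2
    have huv : φ (p 2) * (pd 0 (pd 0 F) p / 2) + deriv (deriv φ) (p 2) = 0 := by
      simpa [brinkM, hΛ] using h 0 1
    have hvv : φ (p 2) * ((F p * pd 0 (pd 0 F) p - pd 2 (pd 2 F) p) / 2) -
        pd 2 F p * deriv φ (p 2) / 2 + deriv (deriv φ) (p 2) * F p = 0 := by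
      simpa [brinkM, hΛ] using h 1 1
    have hvx : φ (p 2) * pd 2 (pd 0 F) p = 0 := by simpa [brinkM] using h 1 2
    refine ⟨hΛ, ?_, hvx, ?_⟩
    · linear_combination 2 * huv
    · linear_combination 2 * F p * huv - 2 * hvv
  · rintro ⟨rfl, huu, hxu, hxx⟩ i j
    have huv : φ (p 2) * (pd 0 (pd 0 F) p / 2) + deriv (deriv φ) (p 2) = 0 := by
      linear_combination huu / 2
    have hvv : φ (p 2) * ((F p * pd 0 (pd 0 F) p - pd 2 (pd 2 F) p) / 2) -
        pd 2 F p * deriv φ (p 2) / 2 + deriv (deriv φ) (p 2) * F p = 0 := by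
      linear_combination F p * huu / 2 - hxx / 2
    fin_cases i <;> fin_cases j <;> simp [brinkM, huv, hvv, mul_eq_zero.1 hxu]

end Brinkmann

section QuadraticPotential

/-- The Brinkmann potential `κu²/2 + α(v)(u + G(x))` with an arbitrary profile `G`. -/
def quadraticPotential (κ : ℝ) (α G : ℝ → ℝ) (p : Pt 3) : ℝ :=
  p 0 ^ 2 * κ / 2 + α (p 1) * (p 0 + G (p 2))

variable {κ : ℝ} {α G : ℝ → ℝ} {p : Pt 3}

theorem contDiffAt_quadraticPotential {m : WithTop ℕ∞} (hα : ContDiffAt ℝ m α (p 1))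
    (hG : ContDiffAt ℝ m G (p 2)) : ContDiffAt ℝ m (quadraticPotential κ α G) p := by
  have happly (j : Fin 3) : ContDiffAt ℝ m (fun q : Pt 3 ↦ q j) p :=
    (contDiff_apply ℝ ℝ j).contDiffAt
  exact ((((happly 0).pow 2).mul contDiffAt_const).div_const 2).add
    ((hα.comp p (happly 1)).mul ((happly 0).add (hG.comp p (happly 2))))

theorem pd_quadraticPotential (hα : DifferentiableAt ℝ α (p 1)) (hG : DifferentiableAt ℝ G (p 2))
    (i : Fin 3) :
    pd i (quadraticPotential κ α G) p =
      ![κ * p 0 + α (p 1), deriv α (p 1) * (p 0 + G (p 2)), α (p 1) * deriv G (p 2)] i := by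
  have hα' : DifferentiableAt ℝ (fun q : Pt 3 ↦ α (q 1)) p := hα.comp p (differentiableAt_apply 1 p)
  have hG' : DifferentiableAt ℝ (fun q : Pt 3 ↦ G (q 2)) p := hG.comp p (differentiableAt_apply 2 p)
  have hsq := pd_comp_apply i 0 (fun u ↦ u ^ 2 * κ / 2) p
  have hu := pd_comp_apply i 0 (fun u ↦ u) p
  unfold quadraticPotential
  rw [pd_add _ (by fun_prop) (by fun_prop), pd_mul _ hα' (by fun_prop), pd_add _ (by fun_prop) hG',
    hsq, hu, pd_comp_apply, pd_comp_apply]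
  fin_cases i <;> simp
  ring

theorem eventually_pd_quadraticPotential (hα : ContDiffAt ℝ 2 α (p 1))
    (hG : ContDiffAt ℝ 2 G (p 2)) (i : Fin 3) :
    pd i (quadraticPotential κ α G) =ᶠ[𝓝 p] fun q ↦
      ![κ * q 0 + α (q 1), deriv α (q 1) * (q 0 + G (q 2)), α (q 1) * deriv G (q 2)] i := by
  filter_upwards [(continuous_apply (1 : Fin 3)).continuousAt.eventually (hα.eventually (by simp)),
    (continuous_apply (2 : Fin 3)).continuousAt.eventually (hG.eventually (by simp))] with q hαq hGq
  exact pd_quadraticPotential (hαq.differentiableAt two_ne_zero)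
    (hGq.differentiableAt two_ne_zero) i

theorem pd_pd_zero_quadraticPotential (hα : ContDiffAt ℝ 2 α (p 1))
    (hG : ContDiffAt ℝ 2 G (p 2)) (i : Fin 3) :
    pd i (pd 0 (quadraticPotential κ α G)) p = ![κ, deriv α (p 1), 0] i := by
  have hα' : DifferentiableAt ℝ (fun q : Pt 3 ↦ α (q 1)) p :=
    (hα.differentiableAt two_ne_zero).comp p (differentiableAt_apply 1 p)
  have hu := pd_comp_apply i 0 (fun u ↦ κ * u) p
  rw [pd_congr i (eventually_pd_quadraticPotential hα hG 0)]
  simp only [Matrix.cons_val_zero]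
  rw [pd_add _ (by fun_prop) hα', hu, pd_comp_apply]
  fin_cases i <;> simp

theorem pd_two_pd_two_quadraticPotential (hα : ContDiffAt ℝ 2 α (p 1))
    (hG : ContDiffAt ℝ 2 G (p 2)) :
    pd 2 (pd 2 (quadraticPotential κ α G)) p = α (p 1) * deriv (deriv G) (p 2) := by
  have hα' : DifferentiableAt ℝ (fun q : Pt 3 ↦ α (q 1)) p :=
    (hα.differentiableAt two_ne_zero).comp p (differentiableAt_apply 1 p)
  have hG' : DifferentiableAt ℝ (fun q : Pt 3 ↦ deriv G (q 2)) p :=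
    DifferentiableAt.comp (g := deriv G) p (differentiableAt_deriv_of_contDiffAt_two hG)
      (differentiableAt_apply 2 p)
  rw [pd_congr 2 (eventually_pd_quadraticPotential hα hG 2)]
  simp only [Matrix.cons_val_two, Matrix.tail_cons, Matrix.head_cons]
  rw [pd_mul _ hα' hG', pd_comp_apply, pd_comp_apply]
  simp

theorem Scal_brinkM_quadraticPotential (hα : ContDiffAt ℝ 2 α (p 1))
    (hG : ContDiffAt ℝ 2 G (p 2)) : Scal (brinkM (quadraticPotential κ α G)) p = κ := by
  simp [Scal_brinkM (contDiffAt_quadraticPotential hα hG), pd_pd_zero_quadraticPotential hα hG]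

theorem WEFEat_brinkM_quadraticPotential {φ : ℝ → ℝ} (hα : ContDiffAt ℝ 2 α (p 1))
    (hG : ContDiffAt ℝ 2 G (p 2)) (hφ : DifferentiableAt ℝ φ (p 2))
    (hφ'' : deriv (deriv φ) (p 2) = -(κ / 2 * φ (p 2)))
    (hφG : deriv (fun x ↦ φ x * deriv G x) (p 2) = 0) :
    WEFEat (brinkM (quadraticPotential κ α G)) (fun q ↦ φ (q 2)) 0 p := by
  have hflux : deriv φ (p 2) * deriv G (p 2) + φ (p 2) * deriv (deriv G) (p 2) = 0 := by
    rw [← hφG, deriv_fun_mul hφ (differentiableAt_deriv_of_contDiffAt_two hG)]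
  rw [WEFEat_brinkM_comp_apply_two_iff φ (contDiffAt_quadraticPotential hα hG),
    pd_pd_zero_quadraticPotential hα hG, pd_pd_zero_quadraticPotential hα hG,
    pd_two_pd_two_quadraticPotential hα hG,
    pd_quadraticPotential (hα.differentiableAt two_ne_zero) (hG.differentiableAt two_ne_zero)]
  refine ⟨rfl, ?_, by simp, ?_⟩
  · rw [hφ'', Matrix.cons_val_zero]
    ring
  · simp only [Matrix.cons_val]
    linear_combination α (p 1) * hflux

end QuadraticPotential

section SecantPrimitive

theorem contDiffAt_artanh {n : WithTop ℕ∞} {t : ℝ} (ht : |t| < 1) : ContDiffAt ℝ n artanh t := by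
  obtain ⟨hl, hr⟩ := abs_lt.1 ht
  have hsub : 1 - t ≠ 0 := by linarith
  have hadd : 1 + t ≠ 0 := by linarith
  exact contDiffAt_const.mul (((contDiffAt_const.add contDiffAt_id).div
    (contDiffAt_const.sub contDiffAt_id) hsub).log (div_ne_zero hadd hsub))

theorem hasDerivAt_artanh {t : ℝ} (ht : |t| < 1) : HasDerivAt artanh (1 - t ^ 2)⁻¹ t := by
  obtain ⟨hl, hr⟩ := abs_lt.1 ht
  have hsub : 1 - t ≠ 0 := by linarith
  have hadd : 1 + t ≠ 0 := by linarith
  have hquot : HasDerivAt (fun s : ℝ ↦ (1 + s) / (1 - s)) _ t :=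
    ((hasDerivAt_id' t).const_add 1).fun_div ((hasDerivAt_id' t).const_sub 1) hsub
  refine ((hquot.log (div_ne_zero hadd hsub)).const_mul (1 / 2)).congr_deriv ?_
  rw [show 1 - t ^ 2 = (1 + t) * (1 - t) by ring]
  field_simp
  ring

theorem cos_two_mul_eq_mul_one_sub_tan_sq {y : ℝ} (hy : Real.cos y ≠ 0) :
    Real.cos (2 * y) = Real.cos y ^ 2 * (1 - Real.tan y ^ 2) := by
  rw [Real.tan_eq_sin_div_cos, Real.cos_two_mul']
  field_simp

-- `Real.tan y = 0` where `cos y = 0`, so a bound on `tan y` alone says nothing about `cos (2 * y)`.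
theorem cos_two_mul_pos_iff {y : ℝ} :
    0 < Real.cos (2 * y) ↔ Real.cos y ≠ 0 ∧ |Real.tan y| < 1 := by
  rw [← sq_lt_one_iff_abs_lt_one]
  constructor
  · intro h
    have hy : Real.cos y ≠ 0 := by
      intro h0
      rw [Real.cos_two_mul, h0] at h
      norm_num at h
    rw [cos_two_mul_eq_mul_one_sub_tan_sq hy] at h
    exact ⟨hy, sub_pos.1 (pos_of_mul_pos_right h (sq_nonneg _))⟩
  · rintro ⟨hy, htan⟩
    rw [cos_two_mul_eq_mul_one_sub_tan_sq hy]
    exact mul_pos (by positivity) (sub_pos.2 htan)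

theorem hasDerivAt_artanh_tan {y : ℝ} (hy : 0 < Real.cos (2 * y)) :
    HasDerivAt (fun z ↦ artanh (Real.tan z)) (Real.cos (2 * y))⁻¹ y := by
  obtain ⟨hcos, htan⟩ := cos_two_mul_pos_iff.1 hy
  refine ((hasDerivAt_artanh htan).comp y (Real.hasDerivAt_tan hcos)).congr_deriv ?_
  rw [cos_two_mul_eq_mul_one_sub_tan_sq hcos, mul_inv, one_div, mul_comm]

/-- The primitive `(2/c) artanh(tan(cx/2))` of `sec(cx)` occurring in `exF`, where
`c = √(κ/2)`. -/
def secPrimitive (c x : ℝ) : ℝ := 2 / c * artanh (Real.tan (x * c / 2))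

theorem mul_sqrt_div_two_mul_sqrt_two (κ x : ℝ) :
    x * √κ / (2 * √2) = x * √(κ / 2) / 2 := by
  rw [Real.sqrt_div' κ zero_le_two]
  ring

theorem exF_eq_quadraticPotential (κ : ℝ) (α : ℝ → ℝ) :
    exF κ α = quadraticPotential κ α (secPrimitive √(κ / 2)) := by
  funext p
  rw [exF, quadraticPotential, secPrimitive, ← inv_div κ 2, Real.sqrt_inv,
    mul_sqrt_div_two_mul_sqrt_two, div_eq_mul_inv 2 √(κ / 2)]

variable {c x : ℝ}

theorem contDiffAt_secPrimitive {n : WithTop ℕ∞} (hx : 0 < Real.cos (x * c)) :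
    ContDiffAt ℝ n (secPrimitive c) x := by
  have hhalf : 0 < Real.cos (2 * (x * c / 2)) := by rwa [mul_div_cancel₀ _ two_ne_zero]
  obtain ⟨hcos, htan⟩ := cos_two_mul_pos_iff.1 hhalf
  have hlin : ContDiffAt ℝ n (fun z ↦ z * c / 2) x := by fun_prop
  have htanlin : ContDiffAt ℝ n (fun z ↦ Real.tan (z * c / 2)) x :=
    ContDiffAt.comp x (g := Real.tan) (Real.contDiffAt_tan.2 hcos) hlin
  exact contDiffAt_const.mul (ContDiffAt.comp x (g := artanh) (contDiffAt_artanh htan) htanlin)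

theorem hasDerivAt_secPrimitive (hc : c ≠ 0) (hx : 0 < Real.cos (x * c)) :
    HasDerivAt (secPrimitive c) (Real.cos (x * c))⁻¹ x := by
  have hlin : HasDerivAt (fun x ↦ x * c / 2) (1 * c / 2) x :=
    ((hasDerivAt_id x).mul_const c).div_const 2
  have hdouble : 2 * (x * c / 2) = x * c := mul_div_cancel₀ _ two_ne_zero
  have hatan := hasDerivAt_artanh_tan (y := x * c / 2) (by rwa [hdouble])
  refine ((hatan.comp x hlin).const_mul (2 / c)).congr_deriv ?_
  rw [hdouble]
  field_simp

theorem deriv_cos_mul_deriv_secPrimitive (hc : c ≠ 0) (hx : 0 < Real.cos (x * c)) :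
    deriv (fun z ↦ Real.cos (z * c) * deriv (secPrimitive c) z) x = 0 := by
  have hcont : Continuous fun z ↦ Real.cos (z * c) := by fun_prop
  have hone : (fun z ↦ Real.cos (z * c) * deriv (secPrimitive c) z) =ᶠ[𝓝 x] fun _ ↦ 1 := by
    filter_upwards [hcont.continuousAt.eventually_const_lt hx] with z hz
    rw [(hasDerivAt_secPrimitive hc hz).deriv, mul_inv_cancel₀ hz.ne']
  rw [hone.deriv_eq, deriv_const]

theorem deriv_cos_mul_const (c : ℝ) :
    deriv (fun x ↦ Real.cos (x * c)) = fun x ↦ -(c * Real.sin (x * c)) := by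
  funext x
  refine (((hasDerivAt_id x).mul_const c).cos.congr_deriv ?_).deriv
  simp only [id]
  ring

theorem deriv_deriv_cos_mul_const (c : ℝ) :
    deriv (deriv fun x ↦ Real.cos (x * c)) = fun x ↦ -(c ^ 2 * Real.cos (x * c)) := by
  rw [deriv_cos_mul_const]
  funext x
  refine ((((hasDerivAt_id x).mul_const c).sin.const_mul c).neg.congr_deriv ?_).deriv
  simp only [id]
  ring

end SecantPrimitive

theorem brinkmann_positive_scalar_curvature_solutions_general
    (κ : ℝ) (hκ : 0 < κ) (α : ℝ → ℝ) (p : Pt 3) (hα : ContDiffAt ℝ 2 α (p 1))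
    (hcos : Real.cos (p 2 * Real.sqrt κ / (2 * Real.sqrt 2)) ≠ 0)
    (htan : |Real.tan (p 2 * Real.sqrt κ / (2 * Real.sqrt 2))| < 1) :
    Scal (brinkM (exF κ α)) p = κ ∧
    WEFEat (brinkM (exF κ α)) (fun q => Real.cos (q 2 * Real.sqrt (κ/2))) 0 p ∧
    gradV (brinkM (exF κ α)) (fun q => Real.cos (q 2 * Real.sqrt (κ/2))) p =
      (fun i => if i = 2 then
        -(Real.sqrt (κ/2) * Real.sin (p 2 * Real.sqrt (κ/2))) else 0) ∧
    gradNorm2 (brinkM (exF κ α)) (fun q => Real.cos (q 2 * Real.sqrt (κ/2))) p =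
      κ / 2 * Real.sin (p 2 * Real.sqrt (κ/2))^2 ∧
    (Real.sin (p 2 * Real.sqrt (κ/2)) ≠ 0 →
      0 < gradNorm2 (brinkM (exF κ α))
        (fun q => Real.cos (q 2 * Real.sqrt (κ/2))) p) := by
  have hc : 0 < √(κ / 2) := Real.sqrt_pos.2 (half_pos hκ)
  have hsq : √(κ / 2) ^ 2 = κ / 2 := Real.sq_sqrt (half_pos hκ).le
  have hpos : 0 < Real.cos (p 2 * √(κ / 2)) := by
    have h := cos_two_mul_pos_iff.2 ⟨hcos, htan⟩
    rwa [mul_sqrt_div_two_mul_sqrt_two, mul_div_cancel₀ _ two_ne_zero] at h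
  have hG : ContDiffAt ℝ 2 (secPrimitive √(κ / 2)) (p 2) := contDiffAt_secPrimitive hpos
  have hnorm : gradNorm2 (brinkM (exF κ α)) (fun q ↦ Real.cos (q 2 * √(κ / 2))) p =
      κ / 2 * Real.sin (p 2 * √(κ / 2)) ^ 2 := by
    rw [gradNorm2_brinkM_comp_apply_two _ fun x ↦ Real.cos (x * √(κ / 2)),
      deriv_cos_mul_const, neg_sq, mul_pow, hsq]
  refine ⟨?_, ?_, ?_, hnorm, fun hsin ↦ ?_⟩
  · rw [exF_eq_quadraticPotential, Scal_brinkM_quadraticPotential hα hG]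
  · rw [exF_eq_quadraticPotential]
    refine WEFEat_brinkM_quadraticPotential (φ := fun x ↦ Real.cos (x * √(κ / 2))) hα hG
      (by fun_prop) ?_ (deriv_cos_mul_deriv_secPrimitive hc.ne' hpos)
    rw [deriv_deriv_cos_mul_const, hsq]
  · rw [gradV_brinkM_comp_apply_two _ fun x ↦ Real.cos (x * √(κ / 2)), deriv_cos_mul_const]
  · rw [hnorm]
    positivity

/-- For `κ > 0` and smooth `α`, the Brinkmann metric with `F`
as in `exF` has scalar curvature `κ`, and `h = cos(x√(κ/2))` satisfies the
vacuum weighted Einstein field equation with `Λ = 0`; moreover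
`∇h = −√(κ/2)·sin(x√(κ/2))·∂_x` and `‖∇h‖² = (κ/2)·sin²(x√(κ/2))`, so `∇h`
is spacelike wherever it is nonzero.  Hence every positive constant scalar
curvature is realized by such a solution on a Brinkmann wave. -/
theorem brinkmann_positive_scalar_curvature_solutions
    (κ : ℝ) (hκ : 0 < κ) (α : ℝ → ℝ) (hα : ContDiff ℝ (⊤ : ℕ∞) α) :
    ∀ p : Pt 3,
      Real.cos (p 2 * Real.sqrt κ / (2 * Real.sqrt 2)) ≠ 0 →
      |Real.tan (p 2 * Real.sqrt κ / (2 * Real.sqrt 2))| < 1 →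
      Scal (brinkM (exF κ α)) p = κ ∧
      WEFEat (brinkM (exF κ α)) (fun q => Real.cos (q 2 * Real.sqrt (κ/2))) 0 p ∧
      gradV (brinkM (exF κ α)) (fun q => Real.cos (q 2 * Real.sqrt (κ/2))) p =
        (fun i => if i = 2 then
          -(Real.sqrt (κ/2) * Real.sin (p 2 * Real.sqrt (κ/2))) else 0) ∧
      gradNorm2 (brinkM (exF κ α)) (fun q => Real.cos (q 2 * Real.sqrt (κ/2))) p =
        κ / 2 * Real.sin (p 2 * Real.sqrt (κ/2))^2 ∧
      (Real.sin (p 2 * Real.sqrt (κ/2)) ≠ 0 →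
        0 < gradNorm2 (brinkM (exF κ α))
          (fun q => Real.cos (q 2 * Real.sqrt (κ/2))) p) := fun p ↦
  brinkmann_positive_scalar_curvature_solutions_general κ hκ α p
    (contDiff_infty.1 hα 2).contDiffAt
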